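/- For every n ≥ 2, the iterate U_n^{4^{n−1}−1} of the Chacon-type map U_n agrees, up to a μ-null set, with a single translation of T² on the square [0,2^{−n})×[1−2^{−n},1), and this translation maps [0,2^{−n})×[1−2^{−n},1) onto the adjacent square [2^{−n},2^{1−n})×[1−2^{−n},1). -/

import Mathlib

/-!
For `m ≥ 1` the map `U_m` permutes the cells of the grid of mesh `2⁻ᵐ`, and acts on them as a single
tower of height `4ᵐ - 1` together with one fixed cell: the top-left cell
`[0,2⁻ᵐ) × [1-2⁻ᵐ,1)` is carried through all cells but the bottom-right one and reaches
`[1-2·2⁻ᵐ,1-2⁻ᵐ) × [0,2⁻ᵐ)` last. The last cell and the fixed cell form exactly the rectangle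
on which `U_{m+1}` differs from `U_m`.

Hence `U_{m+1}` carries each quarter of the top-left cell along the first `4ᵐ - 2` steps of the old
tower, and its new values glue the four quarters (in the order upper left, upper right, lower left,
lower right) and three quarters of the old fixed cell (two of them spacers) to a tower of height
`4 (4ᵐ - 1) + 3 = 4ᵐ⁺¹ - 1`. The theorem for `n = m + 1` is the first gluing: after `4ᵐ - 2` steps
the upper left quarter is in the last cell, and one more step takes it to the upper right quarter of
the top-left cell, a total displacement of `(2⁻ⁿ, 0)`. This holds at every point of the square, so
the exceptional null set is empty.
-/

open MeasureTheory Filter Set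
open scoped ENNReal symmDiff

noncomputable section

instance fact01 : Fact ((0:ℝ) < 1) := ⟨one_pos⟩

/-- The two-dimensional torus `[0,1)²` with coordinatewise addition mod 1. -/
abbrev T2 : Type := AddCircle (1:ℝ) × AddCircle (1:ℝ)

/-- The canonical representative in `[0,1)` of a point of the circle. -/
noncomputable def rep (x : AddCircle (1:ℝ)) : ℝ := ((AddCircle.equivIco 1 0) x : ℝ)

/-- The point of the torus with coordinates `a`, `b` (mod 1). -/
noncomputable def tv (a b : ℝ) : T2 := ((a : AddCircle (1:ℝ)), (b : AddCircle (1:ℝ)))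

open Classical in
/-- The Chacon-type maps `U_n` on the torus. -/
noncomputable def chaconU : ℕ → T2 → T2
  | 0 => id
  | 1 => fun x =>
      if 0 ≤ rep x.1 ∧ rep x.1 < 1/2 ∧ 1/2 ≤ rep x.2 ∧ rep x.2 < 1 then x + tv (1/2) 0
      else if 1/2 ≤ rep x.1 ∧ rep x.1 < 1 ∧ 1/2 ≤ rep x.2 ∧ rep x.2 < 1 then
        x + tv (-(1/2)) (-(1/2))
      else if 0 ≤ rep x.1 ∧ rep x.1 < 1/2 ∧ 0 ≤ rep x.2 ∧ rep x.2 < 1/2 then x + tv 0 (1/2)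
      else x
  | (n+2) => fun x =>
      let s : ℝ := 1 / 2 ^ (n+2)
      let a := rep x.1
      let b := rep x.2
      if 1-4*s ≤ a ∧ a < 1-3*s ∧ s ≤ b ∧ b < 2*s then x + tv (5*s-1) (1-2*s)
      else if 1-3*s ≤ a ∧ a < 1-2*s ∧ s ≤ b ∧ b < 2*s then x + tv s 0
      else if 1-4*s ≤ a ∧ a < 1-3*s ∧ 0 ≤ b ∧ b < s then x + tv (3*s) s
      else if 1-3*s ≤ a ∧ a < 1-2*s ∧ 0 ≤ b ∧ b < s then x + tv s 0
      else if 1-2*s ≤ a ∧ a < 1 ∧ s ≤ b ∧ b < 2*s then x + tv (2*s-1) (1-3*s)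
      else if 1-2*s ≤ a ∧ a < 1-s ∧ 0 ≤ b ∧ b < s then x + tv (2*s-1) (1-s)
      else if 1-s ≤ a ∧ a < 1 ∧ 0 ≤ b ∧ b < s then x
      else chaconU (n+1) x

/-- An automorphism of the torus: measurable, bijective up to null sets with measurable
inverse, and measure-preserving. -/
def IsAutomorphism (U : T2 → T2) : Prop :=
  Measurable U ∧ ∃ V : T2 → T2, Measurable V ∧
    (∀ᵐ x ∂(volume : Measure T2), V (U x) = x) ∧
    (∀ᵐ x ∂(volume : Measure T2), U (V x) = x) ∧
    ∀ A : Set T2, MeasurableSet A → volume (U ⁻¹' A) = volume A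


open scoped Pointwise

section Carries

variable {G : Type*}

lemma image_add_right_vadd [AddCommSemigroup G] (p v : G) (Q : Set G) :
    (· + v) '' (p +ᵥ Q) = (p + v) +ᵥ Q := by
  simp only [← image_vadd, image_image, vadd_eq_add, add_right_comm]

/-- `Carries f D Q k p q`: the map `f^[k]` takes the copy of the shape `Q` placed at `p` by
translation to the copy placed at `q`, and no point of the first copy visits `D` before time `k`. -/
def Carries [Add G] (f : G → G) (D Q : Set G) (k : ℕ) (p q : G) : Prop :=
  ∀ t ∈ Q, f^[k] (p + t) = q + t ∧ ∀ j < k, f^[j] (p + t) ∉ D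

namespace Carries

variable {f g : G → G} {D D' Q Q' : Set G} {k l : ℕ} {p q r : G}

lemma trans [Add G] (hpq : Carries f D Q k p q) (hqr : Carries f D Q l q r) :
    Carries f D Q (k + l) p r := by
  intro t ht
  obtain ⟨hk, hkD⟩ := hpq t ht
  obtain ⟨hl, hlD⟩ := hqr t ht
  have iterate_add (j : ℕ) : f^[k + j] (p + t) = f^[j] (q + t) := by
    rw [add_comm, Function.iterate_add_apply, hk]
  refine ⟨(iterate_add l).trans hl, fun j hj => ?_⟩
  rcases lt_or_ge j k with hjk | hkj
  · exact hkD j hjk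
  · obtain ⟨i, rfl⟩ := Nat.exists_eq_add_of_le hkj
    rw [iterate_add]
    exact hlD i (by omega)

instance [Add G] : Trans (Carries f D Q k) (Carries f D Q l) (Carries f D Q (k + l)) :=
  ⟨trans⟩

lemma congr [Add G] (h : Carries f D Q k p q) (hgf : EqOn g f Dᶜ) : Carries g D Q k p q := by
  intro t ht
  obtain ⟨hk, hD⟩ := h t ht
  have iterate_eq : ∀ j ≤ k, g^[j] (p + t) = f^[j] (p + t) := by
    intro j
    induction j with
    | zero => exact fun _ => rfl
    | succ j ih =>
      intro hj
      rw [Function.iterate_succ_apply', Function.iterate_succ_apply', ih (by omega),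
        hgf (hD j (by omega))]
  exact ⟨(iterate_eq k le_rfl).trans hk, fun j hj => iterate_eq j hj.le ▸ hD j hj⟩

lemma anti [Add G] (h : Carries f D Q k p q) (hD : D' ⊆ D) : Carries f D' Q k p q :=
  fun t ht => ⟨(h t ht).1, fun j hj hm => (h t ht).2 j hj (hD hm)⟩

lemma add_right [AddSemigroup G] (h : Carries f D Q k p q) {d : G} (hQ : d +ᵥ Q' ⊆ Q) :
    Carries f D Q' k (p + d) (q + d) := by
  intro t ht
  rw [add_assoc, add_assoc]
  exact h (d + t) (hQ (vadd_mem_vadd_set ht))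

lemma of_eqOn_add [AddCommSemigroup G] {v : G} (hf : EqOn f (· + v) (p +ᵥ Q))
    (hD : Disjoint (p +ᵥ Q) D) : Carries f D Q 1 p (p + v) := by
  intro t ht
  have hpt : p + t ∈ p +ᵥ Q := vadd_mem_vadd_set ht
  refine ⟨(hf hpt).trans (add_right_comm p t v), fun j hj => ?_⟩
  obtain rfl : j = 0 := by omega
  exact disjoint_left.1 hD hpt

lemma eqOn_iterate [AddCommSemigroup G] {v : G} (h : Carries f D Q k p (p + v)) :
    EqOn f^[k] (· + v) (p +ᵥ Q) := by
  rintro _ ⟨t, ht, rfl⟩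
  exact (h t ht).1.trans (add_right_comm p v t)

end Carries

end Carries

section Coordinates

lemma rep_nonneg (x : AddCircle (1 : ℝ)) : 0 ≤ rep x :=
  (AddCircle.equivIco 1 0 x).2.1

lemma rep_coe {a : ℝ} (h₀ : 0 ≤ a) (h₁ : a < 1) : rep (a : AddCircle (1 : ℝ)) = a := by
  unfold rep
  rw [AddCircle.coe_equivIco_mk_apply]
  simpa using Int.fract_eq_self.2 ⟨h₀, h₁⟩

lemma coe_rep (x : AddCircle (1 : ℝ)) : (rep x : AddCircle (1 : ℝ)) = x :=
  (AddCircle.equivIco 1 0).symm_apply_apply x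

lemma rep_coe_add {a : ℝ} {x : AddCircle (1 : ℝ)} (h₀ : 0 ≤ a + rep x) (h₁ : a + rep x < 1) :
    rep (a + x) = a + rep x := by
  conv_lhs => rw [← coe_rep x, ← AddCircle.coe_add, rep_coe h₀ h₁]

lemma rep_neg_coe_add_lt_iff {a s : ℝ} (ha : 0 ≤ a) (has : a + s ≤ 1) {x : AddCircle (1 : ℝ)} :
    rep (-a + x) < s ↔ a ≤ rep x ∧ rep x < a + s := by
  constructor
  · intro h
    have hnonneg := rep_nonneg (-a + x)
    have hx : rep x = a + rep (-a + x) := by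
      conv_lhs => rw [← add_neg_cancel_left (a : AddCircle (1 : ℝ)) x]
      exact rep_coe_add (by linarith) (by linarith)
    constructor <;> linarith
  · rintro ⟨hax, hxs⟩
    rw [← AddCircle.coe_neg, rep_coe_add (by linarith) (by linarith)]
    linarith

lemma tv_add (a b c d : ℝ) : tv a b + tv c d = tv (a + c) (b + d) := rfl

/-- The square `[0,s) × [0,s)`, the shape of a grid cell of side `s`; the cell with lower left
vertex `(a,b)` is `tv a b +ᵥ square s`. -/
def square (s : ℝ) : Set T2 := {x | rep x.1 < s ∧ rep x.2 < s}

/-- The rectangle `[1-2s,1) × [0,s)`: for `s = 2⁻ᵐ` it is the union of the last cell of the tower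
of `U_m` and the fixed cell of `U_m`. -/
def corner (s : ℝ) : Set T2 := {x | 1 - 2 * s ≤ rep x.1 ∧ rep x.2 < s}

variable {s a b : ℝ}

lemma tv_vadd_square (ha : 0 ≤ a) (has : a + s ≤ 1) (hb : 0 ≤ b) (hbs : b + s ≤ 1) :
    tv a b +ᵥ square s =
      {x | a ≤ rep x.1 ∧ rep x.1 < a + s ∧ b ≤ rep x.2 ∧ rep x.2 < b + s} := by
  ext x
  rw [mem_vadd_set_iff_neg_vadd_mem]
  exact (and_congr (rep_neg_coe_add_lt_iff ha has) (rep_neg_coe_add_lt_iff hb hbs)).trans and_assoc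

lemma corner_subset_corner {s' : ℝ} (h : s ≤ s') : corner s ⊆ corner s' :=
  fun _ hx => ⟨by linarith [hx.1], by linarith [hx.2]⟩

lemma disjoint_tv_vadd_square_corner (ha : 0 ≤ a) (has : a + s ≤ 1) (hb : 0 ≤ b) (hbs : b + s ≤ 1)
    (h : a + s ≤ 1 - 2 * s ∨ s ≤ b) : Disjoint (tv a b +ᵥ square s) (corner s) := by
  rw [tv_vadd_square ha has hb hbs, disjoint_left]
  rintro x ⟨-, hxa, hbx, -⟩ ⟨hx, hxs⟩
  rcases h with h | h <;> linarith

lemma carries_square_of_forall {f : T2 → T2} {u v c d : ℝ} (ha : 0 ≤ a) (has : a + s ≤ 1)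
    (hb : 0 ≤ b) (hbs : b + s ≤ 1) (hD : a + s ≤ 1 - 2 * s ∨ s ≤ b)
    (hf : ∀ x : T2, a ≤ rep x.1 → rep x.1 < a + s → b ≤ rep x.2 → rep x.2 < b + s →
      f x = x + tv u v)
    (hc : a + u = c) (hd : b + v = d) :
    Carries f (corner s) (square s) 1 (tv a b) (tv c d) := by
  subst hc hd
  rw [← tv_add]
  refine .of_eqOn_add ?_ (disjoint_tv_vadd_square_corner ha has hb hbs hD)
  rw [tv_vadd_square ha has hb hbs]
  exact fun x ⟨h₁, h₂, h₃, h₄⟩ => hf x h₁ h₂ h₃ h₄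

end Coordinates

section Mesh

/-- The side length `2⁻ⁿ` of the cells permuted by `U_n`. -/
def mesh (n : ℕ) : ℝ := 1 / 2 ^ n

lemma one_div_two_pow_eq_mesh (n : ℕ) : 1 / 2 ^ n = mesh n := rfl

lemma mesh_pos (n : ℕ) : 0 < mesh n := by unfold mesh; positivity

lemma mesh_eq_two_mul (n : ℕ) : mesh n = 2 * mesh (n + 1) := by
  unfold mesh; field_simp; ring

lemma mesh_le_one (n : ℕ) : mesh n ≤ 1 :=
  div_le_one_of_le₀ (one_le_pow₀ one_le_two) (by positivity)

lemma four_mul_mesh_le_one (n : ℕ) : 4 * mesh (n + 2) ≤ 1 := by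
  linarith [mesh_le_one n, mesh_eq_two_mul n, mesh_eq_two_mul (n + 1)]

end Mesh

section Chacon

lemma chaconU_eqOn_compl_corner (n : ℕ) :
    EqOn (chaconU (n + 2)) (chaconU (n + 1)) (corner (mesh (n + 1)))ᶜ := by
  intro x hx
  have hpos := mesh_pos (n + 2)
  have hx' : 1 - 4 * mesh (n + 2) ≤ rep x.1 → 2 * mesh (n + 2) ≤ rep x.2 := by
    intro h
    rw [mesh_eq_two_mul] at hx
    exact not_lt.1 fun h' => hx ⟨by linarith, h'⟩
  conv_lhs => unfold chaconU
  simp only [one_div_two_pow_eq_mesh]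
  grind

/-- The relation `Carries` for the map `U_n` and the cells it permutes, avoiding the rectangle on
which `U_{n+1}` differs from `U_n`. -/
abbrev CarriesCell (n : ℕ) : ℕ → T2 → T2 → Prop :=
  Carries (chaconU n) (corner (mesh n)) (square (mesh n))

/-- `HasTower n k`: the map `U_n` carries the top-left cell of the grid of mesh `2⁻ⁿ` in `k` steps
to the left neighbour of the bottom-right cell, i.e. up a tower of height `k + 1`. -/
def HasTower (n k : ℕ) : Prop :=
  CarriesCell n k (tv 0 (1 - mesh n)) (tv (1 - 2 * mesh n) 0)

lemma carriesCell_upperLeft (n : ℕ) : CarriesCell (n + 2) 1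
    (tv (1 - 4 * mesh (n + 2)) (mesh (n + 2))) (tv (mesh (n + 2)) (1 - mesh (n + 2))) := by
  have hpos := mesh_pos (n + 2)
  have hle := four_mul_mesh_le_one n
  refine carries_square_of_forall (u := 5 * mesh (n + 2) - 1) (v := 1 - 2 * mesh (n + 2))
    (by linarith) (by linarith) (by linarith) (by linarith) (.inl (by linarith))
    (fun x h₁ h₂ h₃ h₄ => ?_) (by ring) (by ring)
  unfold chaconU
  simp only [one_div_two_pow_eq_mesh]
  grind

lemma carriesCell_upperRight (n : ℕ) : CarriesCell (n + 2) 1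
    (tv (1 - 3 * mesh (n + 2)) (mesh (n + 2))) (tv (1 - 2 * mesh (n + 2)) (mesh (n + 2))) := by
  have hpos := mesh_pos (n + 2)
  have hle := four_mul_mesh_le_one n
  refine carries_square_of_forall (u := mesh (n + 2)) (v := 0) (by linarith)
    (by linarith) (by linarith) (by linarith) (.inl (by linarith))
    (fun x h₁ h₂ h₃ h₄ => ?_) (by ring) (by ring)
  unfold chaconU
  simp only [one_div_two_pow_eq_mesh]
  grind

lemma carriesCell_lowerLeft (n : ℕ) : CarriesCell (n + 2) 1
    (tv (1 - 4 * mesh (n + 2)) 0) (tv (1 - mesh (n + 2)) (mesh (n + 2))) := by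
  have hpos := mesh_pos (n + 2)
  have hle := four_mul_mesh_le_one n
  refine carries_square_of_forall (u := 3 * mesh (n + 2)) (v := mesh (n + 2)) (by linarith)
    (by linarith) (by linarith) (by linarith) (.inl (by linarith))
    (fun x h₁ h₂ h₃ h₄ => ?_) (by ring) (by ring)
  unfold chaconU
  simp only [one_div_two_pow_eq_mesh]
  grind

lemma carriesCell_lowerRight (n : ℕ) : CarriesCell (n + 2) 1
    (tv (1 - 3 * mesh (n + 2)) 0) (tv (1 - 2 * mesh (n + 2)) 0) := by
  have hpos := mesh_pos (n + 2)
  have hle := four_mul_mesh_le_one n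
  refine carries_square_of_forall (u := mesh (n + 2)) (v := 0) (by linarith)
    (by linarith) (by linarith) (by linarith) (.inl (by linarith))
    (fun x h₁ h₂ h₃ h₄ => ?_) (by ring) (by ring)
  unfold chaconU
  simp only [one_div_two_pow_eq_mesh]
  grind

lemma carriesCell_spacerLeft (n : ℕ) : CarriesCell (n + 2) 1
    (tv (1 - 2 * mesh (n + 2)) (mesh (n + 2))) (tv 0 (1 - 2 * mesh (n + 2))) := by
  have hpos := mesh_pos (n + 2)
  have hle := four_mul_mesh_le_one n
  refine carries_square_of_forall (u := 2 * mesh (n + 2) - 1) (v := 1 - 3 * mesh (n + 2))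
    (by linarith) (by linarith) (by linarith) (by linarith) (.inr (by linarith))
    (fun x h₁ h₂ h₃ h₄ => ?_) (by ring) (by ring)
  unfold chaconU
  simp only [one_div_two_pow_eq_mesh]
  grind

lemma carriesCell_spacerRight (n : ℕ) : CarriesCell (n + 2) 1
    (tv (1 - mesh (n + 2)) (mesh (n + 2))) (tv (mesh (n + 2)) (1 - 2 * mesh (n + 2))) := by
  have hpos := mesh_pos (n + 2)
  have hle := four_mul_mesh_le_one n
  refine carries_square_of_forall (u := 2 * mesh (n + 2) - 1) (v := 1 - 3 * mesh (n + 2))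
    (by linarith) (by linarith) (by linarith) (by linarith) (.inr (by linarith))
    (fun x h₁ h₂ h₃ h₄ => ?_) (by ring) (by ring)
  unfold chaconU
  simp only [one_div_two_pow_eq_mesh]
  grind

lemma hasTower_one : HasTower 1 2 := by
  have hmesh : mesh 1 = 1 / 2 := by norm_num [mesh]
  have upper : CarriesCell 1 1 (tv 0 (1 / 2)) (tv (1 / 2) (1 / 2)) := by
    unfold CarriesCell
    rw [hmesh]
    refine carries_square_of_forall (u := 1 / 2) (v := 0) (by norm_num) (by norm_num) (by norm_num)
      (by norm_num) (.inr le_rfl) (fun x h₁ h₂ h₃ h₄ => ?_) (by norm_num) (by norm_num)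
    unfold chaconU
    grind
  have lower : CarriesCell 1 1 (tv (1 / 2) (1 / 2)) (tv 0 0) := by
    unfold CarriesCell
    rw [hmesh]
    refine carries_square_of_forall (u := -(1 / 2)) (v := -(1 / 2)) (by norm_num) (by norm_num)
      (by norm_num) (by norm_num) (.inr le_rfl) (fun x h₁ h₂ h₃ h₄ => ?_)
      (by norm_num) (by norm_num)
    unfold chaconU
    grind
  unfold HasTower
  rw [hmesh]
  convert upper.trans lower using 2 <;> norm_num

lemma HasTower.carriesCell_quarter {n k : ℕ} (h : HasTower (n + 1) k) {a b : ℝ}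
    (ha : a ∈ Icc 0 (mesh (n + 2))) (hb : b ∈ Icc 0 (mesh (n + 2))) :
    CarriesCell (n + 2) k (tv a (1 - mesh (n + 1) + b)) (tv (1 - 2 * mesh (n + 1) + a) b) := by
  have hpos := mesh_pos (n + 2)
  have hle := four_mul_mesh_le_one n
  have hmesh := mesh_eq_two_mul (n + 1)
  have quarter_subset : tv a b +ᵥ square (mesh (n + 2)) ⊆ square (mesh (n + 1)) := by
    rw [tv_vadd_square ha.1 (by linarith [ha.2]) hb.1 (by linarith [hb.2])]
    rintro x ⟨-, hxa, -, hxb⟩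
    exact ⟨by linarith [ha.2], by linarith [hb.2]⟩
  have climb := ((h.congr (chaconU_eqOn_compl_corner n)).anti
    (corner_subset_corner (s := mesh (n + 2)) (by linarith))).add_right quarter_subset
  simpa only [tv_add, zero_add] using climb

lemma HasTower.carriesCell_rightNeighbor {n k : ℕ} (h : HasTower (n + 1) k) :
    CarriesCell (n + 2) (k + 1)
      (tv 0 (1 - mesh (n + 2))) (tv (mesh (n + 2)) (1 - mesh (n + 2))) := by
  have hpos := (mesh_pos (n + 2)).le
  have hmesh := mesh_eq_two_mul (n + 1)
  have climb : CarriesCell (n + 2) k (tv 0 (1 - mesh (n + 2)))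
      (tv (1 - 4 * mesh (n + 2)) (mesh (n + 2))) := by
    convert h.carriesCell_quarter (left_mem_Icc.2 hpos) (right_mem_Icc.2 hpos) using 2 <;> linarith
  exact climb.trans (carriesCell_upperLeft n)

lemma HasTower.succ {n k : ℕ} (h : HasTower (n + 1) k) : HasTower (n + 2) (4 * k + 6) := by
  let s := mesh (n + 2)
  have hpos : 0 ≤ s := (mesh_pos (n + 2)).le
  have hmesh : mesh (n + 1) = 2 * s := mesh_eq_two_mul (n + 1)
  have upperRight : CarriesCell (n + 2) k (tv s (1 - s)) (tv (1 - 3 * s) s) := by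
    convert h.carriesCell_quarter (right_mem_Icc.2 hpos) (right_mem_Icc.2 hpos) using 2 <;> linarith
  have lowerLeft : CarriesCell (n + 2) k (tv 0 (1 - 2 * s)) (tv (1 - 4 * s) 0) := by
    convert h.carriesCell_quarter (left_mem_Icc.2 hpos) (left_mem_Icc.2 hpos) using 2 <;> linarith
  have lowerRight : CarriesCell (n + 2) k (tv s (1 - 2 * s)) (tv (1 - 3 * s) 0) := by
    convert h.carriesCell_quarter (right_mem_Icc.2 hpos) (left_mem_Icc.2 hpos) using 2 <;> linarith
  have orbit := calc
    CarriesCell (n + 2) (k + 1) (tv 0 (1 - s)) (tv s (1 - s)) := h.carriesCell_rightNeighbor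
    CarriesCell (n + 2) k _ (tv (1 - 3 * s) s) := upperRight
    CarriesCell (n + 2) 1 _ (tv (1 - 2 * s) s) := carriesCell_upperRight n
    CarriesCell (n + 2) 1 _ (tv 0 (1 - 2 * s)) := carriesCell_spacerLeft n
    CarriesCell (n + 2) k _ (tv (1 - 4 * s) 0) := lowerLeft
    CarriesCell (n + 2) 1 _ (tv (1 - s) s) := carriesCell_lowerLeft n
    CarriesCell (n + 2) 1 _ (tv s (1 - 2 * s)) := carriesCell_spacerRight n
    CarriesCell (n + 2) k _ (tv (1 - 3 * s) 0) := lowerRight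
    CarriesCell (n + 2) 1 _ (tv (1 - 2 * s) 0) := carriesCell_lowerRight n
  have length : 4 * k + 6 = k + 1 + k + 1 + 1 + k + 1 + 1 + k + 1 := by ring
  exact length ▸ orbit

lemma hasTower (n : ℕ) : HasTower (n + 1) (4 ^ (n + 1) - 2) := by
  induction n with
  | zero => exact hasTower_one
  | succ n ih =>
    convert ih.succ using 1
    have := Nat.one_le_pow n 4 (by norm_num)
    omega

lemma chaconU_iterate_eqOn_topLeft (n : ℕ) :
    EqOn (chaconU (n + 2))^[4 ^ (n + 1) - 1] (· + tv (mesh (n + 2)) 0)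
      (tv 0 (1 - mesh (n + 2)) +ᵥ square (mesh (n + 2))) := by
  have length : 4 ^ (n + 1) - 1 = 4 ^ (n + 1) - 2 + 1 := by
    have := Nat.one_lt_pow n.succ_ne_zero (by norm_num : 1 < 4)
    omega
  have displacement : tv (mesh (n + 2)) (1 - mesh (n + 2)) =
      tv 0 (1 - mesh (n + 2)) + tv (mesh (n + 2)) 0 := by
    rw [tv_add, zero_add, add_zero]
  rw [length]
  exact Carries.eqOn_iterate (displacement ▸ (hasTower n).carriesCell_rightNeighbor)

end Chacon

/-- For `n ≥ 2`, the iterate `U_n^{4^{n-1}-1}` agrees up to a null set with a single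
translation of the torus on the square `[0,2^{-n}) × [1-2^{-n},1)`, and this translation
maps that square onto the adjacent square `[2^{-n},2^{1-n}) × [1-2^{-n},1)`. -/
theorem chaconU_iterate_is_translation (n : ℕ) (hn : 2 ≤ n)
    (S S' : Set T2)
    (hS : S = {x : T2 | 0 ≤ rep x.1 ∧ rep x.1 < 1/2^n ∧
                        1 - 1/2^n ≤ rep x.2 ∧ rep x.2 < 1})
    (hS' : S' = {x : T2 | 1/2^n ≤ rep x.1 ∧ rep x.1 < 2/2^n ∧
                          1 - 1/2^n ≤ rep x.2 ∧ rep x.2 < 1}) :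
    ∃ v : T2,
      volume {x : T2 | x ∈ S ∧ (chaconU n)^[4 ^ (n-1) - 1] x ≠ x + v} = 0 ∧
      (fun x : T2 => x + v) '' S = S' := by
  obtain ⟨m, rfl⟩ := Nat.exists_eq_add_of_le' hn
  let s := mesh (m + 2)
  have hpos : 0 < s := mesh_pos (m + 2)
  have hle : 4 * s ≤ 1 := four_mul_mesh_le_one m
  have hS : S = tv 0 (1 - s) +ᵥ square s := by
    rw [hS, tv_vadd_square le_rfl (by linarith) (by linarith) (by linarith), zero_add,
      sub_add_cancel]
    rfl
  have hS' : S' = tv s (1 - s) +ᵥ square s := by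
    rw [hS', tv_vadd_square (by linarith) (by linarith) (by linarith) (by linarith),
      ← two_mul, sub_add_cancel, ← mul_one_div 2]
    rfl
  refine ⟨tv s 0, ?_, ?_⟩
  · convert measure_empty (μ := (volume : Measure T2))
    exact eq_empty_of_forall_notMem fun x ⟨hx, hne⟩ =>
      hne (chaconU_iterate_eqOn_topLeft m (hS ▸ hx))
  · rw [hS, hS', image_add_right_vadd, tv_add, zero_add, add_zero]

end
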